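/- arXiv:1603.03138 — 2 statements merged into one kernel-verified Lean document; each statement's English description precedes it below -/
import Mathlib

section
/- Let (W,S) be a Coxeter group, w ∈ W, and (s,t) ∈ 𝔐. Let →a and →b be reduced expressions for w such that →b is obtained from →a by an (s,t)-braid move, and let q ∈ W be such that Invs →b is obtained from Invs →a by replacing a factor equal to q ρ_{s,t} q⁻¹ by its reversal. Set s' = qsq⁻¹ and t' = qtq⁻¹. Then Has →b = Has →a − (s',t') + (t',s') in the free ℤ-module ℤ[𝔑]. -/
open scoped Classical

/-- The word `(s, t, s, t, …)` with `m` letters. -/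
def altList {α : Type*} (s t : α) (m : ℕ) : List α :=
  (List.range m).map (fun k => if k % 2 = 0 then s else t)

/-- The word `ρ_{s,t} = ((st)^0 s, (st)^1 s, …, (st)^{m-1} s)`. -/
def rhoWord {W : Type*} [Group W] (s t : W) (m : ℕ) : List W :=
  (List.range m).map (fun k => (s * t) ^ k * s)

/-- `b` is obtained from `a` by an `(s_i, s_j)`-braid move: a factor
`(i,j,i,j,…)` of length `M i j` of `a` is replaced by `(j,i,j,i,…)`. -/
def IsBraidMove {B W : Type*} [Group W] {M : CoxeterMatrix B}
    (cs : CoxeterSystem M W) (i j : B) (a b : List B) : Prop :=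
  i ≠ j ∧ M.M i j ≠ 0 ∧
  ∃ p : ℕ, p + M.M i j ≤ a.length ∧
    a = a.take p ++ altList i j (M.M i j) ++ a.drop (p + M.M i j) ∧
    b = a.take p ++ altList j i (M.M i j) ++ a.drop (p + M.M i j)

/-- The set `𝔑 = ⋃_{x ∈ W} x 𝔐 x⁻¹` of pairs of reflections componentwise conjugate to
a pair in `𝔐 = {(s_i, s_j) : i ≠ j, M i j ≠ 0}`. -/
def NSet {B W : Type*} [Group W] {M : CoxeterMatrix B}
    (cs : CoxeterSystem M W) : Set (W × W) :=
  {p | ∃ (x : W) (i j : B), i ≠ j ∧ M.M i j ≠ 0 ∧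
    p.1 = x * cs.simple i * x⁻¹ ∧ p.2 = x * cs.simple j * x⁻¹}

/-- `HasFn cs ω : W × W → ℤ` is the coordinate vector of `Has →ω ∈ ℤ[𝔑]`: its value at
`(u, v)` is `1` if `ρ_{u,v}` appears as a subword of the inversion word of `ω`, else `0`. -/
noncomputable def HasFn {B W : Type*} [Group W] {M : CoxeterMatrix B}
    (cs : CoxeterSystem M W) (ω : List B) : W × W → ℤ :=
  fun p => if List.Sublist (rhoWord p.1 p.2 (orderOf (p.1 * p.2))) (cs.leftInvSeq ω)
    then 1 else 0

/-!
Reversing a factor `ρ_{s',t'}` of an inversion word only affects the subwords `ρ_{u,v}` that share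
at least two reflections with it. The reflections in `ρ_{u,v}` are those of the rank-two parabolic
subgroup `⟨u, v⟩`, and two such subgroups sharing two reflections coincide. Hence an affected
`ρ_{u,v}` has the same letters as `ρ_{s',t'}`, so, as a subword of a word without repetitions, it is
the factor itself or its reversal, that is, `(u, v)` is `(s', t')` or `(t', s')`.

For the coincidence, conjugate so that the first subgroup is a standard parabolic `W_I` and the
second is `z⁻¹ W_J z` with `z` of minimal length in `z W_I`. As `z` then has no right inversion in
`W_I`, the cocycle identity for the parity of inversions shows that `W_I ⊓ z⁻¹ W_J z` contains the
right inversions of its elements. It is therefore standard parabolic, and a standard parabolic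
subgroup of `W_I`, `|I| = 2`, containing two reflections is `W_I`.
-/

section RhoWord

variable {G : Type*} [Group G]

theorem length_rhoWord (u v : G) (m : ℕ) : (rhoWord u v m).length = m := by
  simp only [rhoWord, List.length_map, List.length_range]

theorem getElem_rhoWord (u v : G) {m k : ℕ} (hk : k < (rhoWord u v m).length) :
    (rhoWord u v m)[k] = (u * v) ^ k * u := by
  simp only [rhoWord, List.getElem_map, List.getElem_range]

theorem rhoWord_succ (u v : G) (m : ℕ) :
    rhoWord u v (m + 1) = rhoWord u v m ++ [(u * v) ^ m * u] := by
  simp only [rhoWord, List.range_succ, List.map_append, List.map_singleton]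

theorem rhoWord_add_of_pow_eq_one {u v : G} {m : ℕ} (h : (u * v) ^ m = 1) (n : ℕ) :
    rhoWord u v (m + n) = rhoWord u v m ++ rhoWord u v n := by
  simp only [rhoWord, List.range_add, List.map_append, List.map_map, Function.comp_def, pow_add,
    h, one_mul]

theorem map_conj_rhoWord (q u v : G) (m : ℕ) :
    (rhoWord u v m).map (fun x => q * x * q⁻¹) = rhoWord (q * u * q⁻¹) (q * v * q⁻¹) m := by
  simp only [rhoWord, List.map_map, Function.comp_def, ← conj_mul, ← conj_pow]

theorem reverse_rhoWord {u v : G} {m : ℕ} (hu : u⁻¹ = u) (hv : v⁻¹ = v) (h : (u * v) ^ m = 1) :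
    (rhoWord u v m).reverse = rhoWord v u m := by
  refine List.ext_getElem (by simp only [List.length_reverse, length_rhoWord]) fun k hk _ => ?_
  rw [List.length_reverse, length_rhoWord] at hk
  have hpow : (u * v) ^ (m - 1 - k) * (u * v) ^ (k + 1) = 1 := by
    rw [← pow_add, show m - 1 - k + (k + 1) = m by omega, h]
  have hvu : (u * v)⁻¹ = v * u := by rw [mul_inv_rev, hu, hv]
  rw [List.getElem_reverse, getElem_rhoWord, getElem_rhoWord, length_rhoWord,
    eq_inv_of_mul_eq_one_left hpow, ← inv_pow, hvu, pow_succ, mul_assoc, mul_assoc,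
    eq_inv_iff_mul_eq_one.mp hu.symm, mul_one]

theorem orderOf_mul_of_nodup_rhoWord {u v : G} {m : ℕ} (hm : m ≠ 0) (h : (u * v) ^ m = 1)
    (hnodup : (rhoWord u v m).Nodup) : orderOf (u * v) = m := by
  have hpos : 0 < orderOf (u * v) := orderOf_pos_iff.mpr
    (isOfFinOrder_iff_pow_eq_one.mpr ⟨m, Nat.pos_of_ne_zero hm, h⟩)
  refine (orderOf_le_of_pow_eq_one (Nat.pos_of_ne_zero hm) h).eq_of_not_lt fun hlt => hpos.ne ?_
  refine (hnodup.getElem_inj_iff (hi := by simpa only [length_rhoWord] using hpos.trans hlt)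
    (hj := by simpa only [length_rhoWord] using hlt)).mp ?_
  rw [getElem_rhoWord, getElem_rhoWord, pow_orderOf_eq_one, pow_zero]

theorem exists_zpow_of_mem_closure_pair {u v g : G} (hu : u⁻¹ = u) (hv : v⁻¹ = v)
    (hg : g ∈ Subgroup.closure {u, v}) :
    ∃ c : ℤ, g = (u * v) ^ c ∨ g = (u * v) ^ c * u := by
  have huu : u * u = 1 := eq_inv_iff_mul_eq_one.mp hu.symm
  have hv_eq : v = (u * v)⁻¹ * u := by rw [mul_inv_rev, hu, hv, mul_assoc, huu, mul_one]
  have mul_u {g : G} : (∃ c : ℤ, g = (u * v) ^ c ∨ g = (u * v) ^ c * u) →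
      ∃ c : ℤ, g * u = (u * v) ^ c ∨ g * u = (u * v) ^ c * u := by
    rintro ⟨c, rfl | rfl⟩
    · exact ⟨c, .inr rfl⟩
    · exact ⟨c, .inl (by rw [mul_assoc, huu, mul_one])⟩
  have mul_v {g : G} : (∃ c : ℤ, g = (u * v) ^ c ∨ g = (u * v) ^ c * u) →
      ∃ c : ℤ, g * v = (u * v) ^ c ∨ g * v = (u * v) ^ c * u := by
    rintro ⟨c, rfl | rfl⟩
    · exact ⟨c - 1, .inr (by rw [zpow_sub_one, mul_assoc, ← hv_eq])⟩
    · exact ⟨c + 1, .inl (by rw [zpow_add_one, mul_assoc])⟩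
  induction hg using Subgroup.closure_induction_right with
  | one => exact ⟨0, .inl (zpow_zero _).symm⟩
  | mul_right _ _ y hy ih =>
    rcases hy with rfl | rfl
    exacts [mul_u ih, mul_v ih]
  | mul_inv_cancel _ _ y hy ih =>
    rcases hy with rfl | rfl
    exacts [hu.symm ▸ mul_u ih, hv.symm ▸ mul_v ih]

/-- The word `ρ_{u,v}` of a pair `p = (u, v)`, its length `m_{u,v}` being encoded, as in `HasFn`,
as the order of `u * v`. -/
noncomputable def rho (p : G × G) : List G :=
  rhoWord p.1 p.2 (orderOf (p.1 * p.2))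

theorem nodup_rho (p : G × G) : (rho p).Nodup :=
  List.nodup_range.map_on fun _ hk _ hl h =>
    pow_injOn_Iio_orderOf (List.mem_range.mp hk) (List.mem_range.mp hl) (mul_right_cancel h)

theorem rho_swap {p : G × G} (h₁ : p.1⁻¹ = p.1) (h₂ : p.2⁻¹ = p.2) :
    rho p.swap = (rho p).reverse := by
  rw [rho, rho, reverse_rhoWord h₁ h₂ (pow_orderOf_eq_one _), Prod.fst_swap, Prod.snd_swap,
    ← orderOf_inv (p.2 * p.1), mul_inv_rev, h₁, h₂]

theorem eq_of_rho_eq {p r : G × G} (hp : 0 < orderOf (p.1 * p.2)) (h : rho p = rho r) : p = r := by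
  have hord : orderOf (p.1 * p.2) = orderOf (r.1 * r.2) := by
    simpa only [rho, length_rhoWord] using congrArg List.length h
  have hentry (k : ℕ) : (p.1 * p.2) ^ k * p.1 = (r.1 * r.2) ^ k * r.1 := by
    have hk := Nat.mod_lt k hp
    rw [← pow_mod_orderOf, ← pow_mod_orderOf (r.1 * r.2), ← hord,
      ← getElem_rhoWord (m := orderOf (p.1 * p.2)) p.1 p.2 (by rwa [length_rhoWord]),
      ← getElem_rhoWord (m := orderOf (r.1 * r.2)) r.1 r.2 (by rwa [length_rhoWord, ← hord])]
    exact List.getElem_of_eq h _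
  have hfst : p.1 = r.1 := by simpa only [pow_zero, one_mul] using hentry 0
  have hsnd : p.1 * p.2 * p.1 = r.1 * r.2 * r.1 := by simpa only [pow_one] using hentry 1
  rw [hfst] at hsnd
  exact Prod.ext hfst (mul_left_cancel (mul_right_cancel hsnd))

end RhoWord

section InversionParity

variable {B W : Type*} [Group W] {M : CoxeterMatrix B} (cs : CoxeterSystem M W)

/-- The action of a simple reflection on `W × ℤ/2`: it conjugates the first coordinate and flips
the second one exactly when the first coordinate is that simple reflection. -/
noncomputable def simpleAction (i : B) : Function.End (W × ZMod 2) :=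
  fun p => (cs.simple i * p.1 * (cs.simple i)⁻¹, p.2 + if p.1 = cs.simple i then 1 else 0)

theorem prod_map_simpleAction (ω : List B) (t : W) (e : ZMod 2) :
    (ω.map (simpleAction cs)).prod (t, e) =
      (cs.wordProd ω * t * (cs.wordProd ω)⁻¹, e + (cs.rightInvSeq ω).count t) := by
  induction ω with
  | nil => simp [Function.End.one_def]
  | cons i ω ih =>
    have hi : cs.wordProd ω * t * (cs.wordProd ω)⁻¹ = cs.simple i ↔
        (cs.wordProd ω)⁻¹ * cs.simple i * cs.wordProd ω = t := by
      rw [mul_inv_eq_iff_eq_mul, mul_assoc, inv_mul_eq_iff_eq_mul, eq_comm]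
    rw [List.map_cons, List.prod_cons]
    change simpleAction cs i ((ω.map (simpleAction cs)).prod (t, e)) = _
    rw [ih, simpleAction, cs.wordProd_cons, CoxeterSystem.rightInvSeq, List.count_cons]
    refine Prod.ext (by simp only [mul_inv_rev, mul_assoc]) ?_
    simp only [hi, beq_iff_eq, Nat.cast_add, Nat.cast_ite, Nat.cast_one, Nat.cast_zero, add_assoc]

theorem alternatingWord_two_mul_succ (i j : B) (m : ℕ) :
    CoxeterSystem.alternatingWord i j (2 * (m + 1)) =
      i :: j :: CoxeterSystem.alternatingWord i j (2 * m) := by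
  rw [mul_add_one, CoxeterSystem.alternatingWord_succ', CoxeterSystem.alternatingWord_succ',
    if_neg (by simp [parity_simps]), if_pos (even_two_mul m)]

theorem rightInvSeq_alternatingWord_two_mul (i j : B) (m : ℕ) :
    cs.rightInvSeq (CoxeterSystem.alternatingWord i j (2 * m)) =
      (rhoWord (cs.simple j) (cs.simple i) (2 * m)).reverse := by
  induction m with
  | zero => simp [CoxeterSystem.alternatingWord, rhoWord]
  | succ m ih =>
    have hconj : ((cs.simple i * cs.simple j) ^ m)⁻¹ = (cs.simple j * cs.simple i) ^ m := by
      rw [← inv_pow, mul_inv_rev, cs.inv_simple, cs.inv_simple]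
    have hcomm : cs.simple j * (cs.simple i * cs.simple j) ^ m =
        (cs.simple j * cs.simple i) ^ m * cs.simple j :=
      (SemiconjBy.pow_right (by simp only [SemiconjBy, mul_assoc]) m).eq
    have hodd : (cs.simple j * cs.simple i) ^ m * cs.simple j * cs.simple i *
        (cs.simple j * (cs.simple i * cs.simple j) ^ m) =
          (cs.simple j * cs.simple i) ^ (2 * m + 1) * cs.simple j := by
      rw [hcomm, mul_assoc _ (cs.simple j) (cs.simple i), ← mul_assoc, ← pow_succ, ← pow_add,
        show m + 1 + m = 2 * m + 1 by ring]
    have heven : (cs.simple j * cs.simple i) ^ m * cs.simple j *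
        (cs.simple i * cs.simple j) ^ m = (cs.simple j * cs.simple i) ^ (2 * m) * cs.simple j := by
      rw [mul_assoc, hcomm, ← mul_assoc, ← pow_add, two_mul]
    have hprod : cs.wordProd (CoxeterSystem.alternatingWord i j (2 * m)) =
        (cs.simple i * cs.simple j) ^ m := by
      rw [cs.prod_alternatingWord_eq_mul_pow, if_pos (even_two_mul m),
        Nat.mul_div_cancel_left m two_pos, one_mul]
    rw [alternatingWord_two_mul_succ, mul_add_one 2 m, rhoWord_succ, rhoWord_succ,
      List.reverse_append, List.reverse_append, ← ih, CoxeterSystem.rightInvSeq,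
      CoxeterSystem.rightInvSeq, cs.wordProd_cons, hprod, mul_inv_rev, cs.inv_simple, hconj, hodd,
      heven]
    rfl

theorem isLiftable_simpleAction : M.IsLiftable (simpleAction cs) := by
  intro i j
  have hword (m : ℕ) : (simpleAction cs i * simpleAction cs j) ^ m =
      ((CoxeterSystem.alternatingWord i j (2 * m)).map (simpleAction cs)).prod := by
    induction m with
    | zero => rfl
    | succ m ih =>
      rw [alternatingWord_two_mul_succ, pow_succ', ih, List.map_cons, List.map_cons,
        List.prod_cons, List.prod_cons, mul_assoc]
  have hprod : cs.wordProd (CoxeterSystem.alternatingWord i j (2 * M i j)) = 1 := by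
    rw [cs.prod_alternatingWord_eq_mul_pow, if_pos (even_two_mul _),
      Nat.mul_div_cancel_left _ two_pos, cs.simple_mul_simple_pow, one_mul]
  have hcount (t : W) : ((cs.rightInvSeq (CoxeterSystem.alternatingWord i j (2 * M i j))).count t
      : ZMod 2) = 0 := by
    rw [rightInvSeq_alternatingWord_two_mul, List.count_reverse, two_mul,
      rhoWord_add_of_pow_eq_one (cs.simple_mul_simple_pow' i j), List.count_append, Nat.cast_add,
      CharTwo.add_self_eq_zero]
  funext ⟨t, e⟩
  rw [hword, prod_map_simpleAction, hprod, hcount]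
  simp [Function.End.one_def]

/-- The permutation representation of `W` on `W × ℤ/2`; its second coordinate counts, modulo `2`,
how often an element occurs in a right inversion sequence. -/
noncomputable def reflectionRep : W →* Function.End (W × ZMod 2) :=
  cs.lift ⟨simpleAction cs, isLiftable_simpleAction cs⟩

/-- The parity of the number of occurrences of `t` in the right inversion sequence of any word
for `w`. -/
noncomputable def inversionParity (w t : W) : ZMod 2 :=
  (reflectionRep cs w (t, 0)).2

theorem reflectionRep_wordProd (ω : List B) (t : W) (e : ZMod 2) :
    reflectionRep cs (cs.wordProd ω) (t, e) =
      (cs.wordProd ω * t * (cs.wordProd ω)⁻¹, e + (cs.rightInvSeq ω).count t) := by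
  have hlift (i : B) : reflectionRep cs (cs.simple i) = simpleAction cs i :=
    cs.lift_apply_simple _ _
  rw [← prod_map_simpleAction, CoxeterSystem.wordProd, map_list_prod, List.map_map]
  simp only [Function.comp_def, hlift]

theorem inversionParity_wordProd (ω : List B) (t : W) :
    inversionParity cs (cs.wordProd ω) t = (cs.rightInvSeq ω).count t := by
  rw [inversionParity, reflectionRep_wordProd, zero_add]

theorem reflectionRep_apply (w t : W) (e : ZMod 2) :
    reflectionRep cs w (t, e) = (w * t * w⁻¹, e + inversionParity cs w t) := by
  obtain ⟨ω, rfl⟩ := cs.wordProd_surjective w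
  rw [reflectionRep_wordProd, inversionParity_wordProd]

theorem inversionParity_mul (x y t : W) :
    inversionParity cs (x * y) t =
      inversionParity cs y t + inversionParity cs x (y * t * y⁻¹) := by
  have h : reflectionRep cs (x * y) (t, 0) = reflectionRep cs x (reflectionRep cs y (t, 0)) := by
    rw [map_mul]
    rfl
  rw [inversionParity, h, reflectionRep_apply cs y, reflectionRep_apply cs x, zero_add]

theorem inversionParity_one (t : W) : inversionParity cs 1 t = 0 := by
  simpa using inversionParity_wordProd cs [] t

theorem inversionParity_simple_self (i : B) :
    inversionParity cs (cs.simple i) (cs.simple i) = 1 := by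
  simpa using inversionParity_wordProd cs [i] (cs.simple i)

theorem inversionParity_conj (z g t : W) :
    inversionParity cs (z * g * z⁻¹) (z * t * z⁻¹) =
      inversionParity cs g t + inversionParity cs z t + inversionParity cs z (g * t * g⁻¹) := by
  have hcancel : inversionParity cs z t + inversionParity cs z⁻¹ (z * t * z⁻¹) = 0 := by
    rw [← inversionParity_mul, inv_mul_cancel, inversionParity_one]
  have hinv : z⁻¹ * (z * t * z⁻¹) * z⁻¹⁻¹ = t := by group
  rw [inversionParity_mul, inversionParity_mul cs z g, hinv, ← add_assoc,
    ← CharTwo.add_eq_zero.mp hcancel, add_comm (inversionParity cs z t)]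

theorem inversionParity_self {t : W} (ht : cs.IsReflection t) : inversionParity cs t t = 1 := by
  obtain ⟨z, i, rfl⟩ := ht
  rw [inversionParity_conj, mul_inv_cancel_right, inversionParity_simple_self, add_assoc,
    CharTwo.add_self_eq_zero, add_zero]

theorem mem_rightInvSeq_of_inversionParity_ne_zero {ω : List B} {t : W}
    (h : inversionParity cs (cs.wordProd ω) t ≠ 0) : t ∈ cs.rightInvSeq ω := by
  contrapose! h
  rw [inversionParity_wordProd, List.count_eq_zero_of_not_mem h, Nat.cast_zero]

theorem isRightInversion_of_inversionParity_ne_zero {w t : W} (h : inversionParity cs w t ≠ 0) :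
    cs.IsRightInversion w t := by
  obtain ⟨ω, hω, rfl⟩ := cs.exists_isReduced w
  exact cs.isRightInversion_of_mem_rightInvSeq hω (mem_rightInvSeq_of_inversionParity_ne_zero cs h)

theorem isRightInversion_iff_inversionParity_ne_zero {w t : W} :
    cs.IsRightInversion w t ↔ inversionParity cs w t ≠ 0 := by
  refine ⟨fun ⟨ht, hlt⟩ h => ?_, isRightInversion_of_inversionParity_ne_zero cs⟩
  have hne : inversionParity cs (w * t) t ≠ 0 := by
    rw [inversionParity_mul, inversionParity_self cs ht, mul_inv_cancel_right, h, add_zero]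
    exact one_ne_zero
  have hlt' := (isRightInversion_of_inversionParity_ne_zero cs hne).2
  rw [mul_assoc, ht.mul_self, mul_one] at hlt'
  exact lt_asymm hlt hlt'

theorem exists_eraseIdx_of_isRightInversion {ω : List B} {t : W}
    (h : cs.IsRightInversion (cs.wordProd ω) t) :
    ∃ n < ω.length, cs.wordProd ω * t = cs.wordProd (ω.eraseIdx n) := by
  have hmem := mem_rightInvSeq_of_inversionParity_ne_zero cs
    ((isRightInversion_iff_inversionParity_ne_zero cs).mp h)
  obtain ⟨n, hn, rfl⟩ := List.getElem_of_mem hmem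
  refine ⟨n, by simpa only [cs.length_rightInvSeq] using hn, ?_⟩
  rw [← cs.wordProd_mul_getD_rightInvSeq, List.getD_eq_getElem _ _ hn]

end InversionParity

section StandardParabolic

open scoped Pointwise

variable {B W : Type*} [Group W] {M : CoxeterMatrix B} (cs : CoxeterSystem M W)

/-- The standard parabolic subgroup `W_J`, generated by the simple reflections indexed by `J`. -/
def standardParabolic (J : Set B) : Subgroup W :=
  Subgroup.closure (cs.simple '' J)

variable {J : Set B}

theorem simple_mem_standardParabolic {i : B} (hi : i ∈ J) :
    cs.simple i ∈ standardParabolic cs J :=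
  Subgroup.subset_closure (Set.mem_image_of_mem _ hi)

theorem wordProd_mem_standardParabolic {ω : List B} (hω : ∀ i ∈ ω, i ∈ J) :
    cs.wordProd ω ∈ standardParabolic cs J :=
  list_prod_mem <| List.forall_mem_map.mpr fun i hi => simple_mem_standardParabolic cs (hω i hi)

theorem mem_standardParabolic_of_mem_rightInvSeq {ω : List B} (hω : ∀ i ∈ ω, i ∈ J) {t : W}
    (ht : t ∈ cs.rightInvSeq ω) : t ∈ standardParabolic cs J := by
  induction ω with
  | nil => exact absurd ht List.not_mem_nil
  | cons i ω ih =>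
    obtain ⟨hi, hω⟩ := List.forall_mem_cons.mp hω
    rcases List.mem_cons.mp ht with rfl | ht
    · have hmem := wordProd_mem_standardParabolic cs hω
      exact mul_mem (mul_mem (inv_mem hmem) (simple_mem_standardParabolic cs hi)) hmem
    · exact ih hω ht

theorem exists_isReduced_of_mem_standardParabolic {g : W} (hg : g ∈ standardParabolic cs J) :
    ∃ ω : List B, (∀ i ∈ ω, i ∈ J) ∧ cs.IsReduced ω ∧ g = cs.wordProd ω := by
  have step {g : W} {i : B} (hi : i ∈ J)
      (h : ∃ ω : List B, (∀ i ∈ ω, i ∈ J) ∧ cs.IsReduced ω ∧ g = cs.wordProd ω) :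
      ∃ ω : List B, (∀ i ∈ ω, i ∈ J) ∧ cs.IsReduced ω ∧ g * cs.simple i = cs.wordProd ω := by
    obtain ⟨ω, hωJ, hω, rfl⟩ := h
    rcases cs.length_mul_simple (cs.wordProd ω) i with hup | hdown
    · refine ⟨ω ++ [i], ?_, ?_, ?_⟩
      · simpa only [List.forall_mem_append, List.forall_mem_singleton] using ⟨hωJ, hi⟩
      · rw [CoxeterSystem.IsReduced, cs.wordProd_append, cs.wordProd_singleton, hup, hω,
          List.length_append, List.length_singleton]
      · rw [cs.wordProd_append, cs.wordProd_singleton]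
    · obtain ⟨n, hn, herase⟩ := exists_eraseIdx_of_isRightInversion cs
        (ω := ω) ⟨cs.isReflection_simple i, by omega⟩
      refine ⟨ω.eraseIdx n, fun k hk => hωJ k (List.mem_of_mem_eraseIdx hk), ?_, herase⟩
      rw [CoxeterSystem.IsReduced, ← herase, List.length_eraseIdx_of_lt hn, ← hω.eq]
      omega
  induction hg using Subgroup.closure_induction_right with
  | one =>
    exact ⟨[], List.forall_mem_nil _, by simp [CoxeterSystem.IsReduced], cs.wordProd_nil.symm⟩
  | mul_right _ _ y hy ih =>
    obtain ⟨i, hi, rfl⟩ := hy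
    exact step hi ih
  | mul_inv_cancel _ _ y hy ih =>
    obtain ⟨i, hi, rfl⟩ := hy
    rw [cs.inv_simple]
    exact step hi ih

/-- A subgroup of `W` is inversion-closed if it contains all right inversions of its elements.
Among the subgroups of `W`, these are the standard parabolic ones. -/
def IsInversionClosed (H : Subgroup W) : Prop :=
  ∀ g ∈ H, ∀ t, cs.IsRightInversion g t → t ∈ H

theorem isInversionClosed_standardParabolic (J : Set B) :
    IsInversionClosed cs (standardParabolic cs J) := by
  intro g hg t ht
  obtain ⟨ω, hωJ, -, rfl⟩ := exists_isReduced_of_mem_standardParabolic cs hg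
  exact mem_standardParabolic_of_mem_rightInvSeq cs hωJ <|
    mem_rightInvSeq_of_inversionParity_ne_zero cs <|
      (isRightInversion_iff_inversionParity_ne_zero cs).mp ht

variable {cs} {H K : Subgroup W}

theorem IsInversionClosed.simple_mem_of_isReduced (hH : IsInversionClosed cs H) {ω : List B}
    (hω : cs.IsReduced ω) (hmem : cs.wordProd ω ∈ H) : ∀ i ∈ ω, cs.simple i ∈ H := by
  induction ω using List.reverseRecOn with
  | nil => exact List.forall_mem_nil _
  | append_singleton ω i ih =>
    have hi : cs.simple i ∈ H := hH _ hmem _ <| cs.isRightInversion_of_mem_rightInvSeq hω <| by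
      rw [← List.concat_eq_append, cs.rightInvSeq_concat, List.concat_eq_append]
      exact List.mem_append_right _ (List.mem_singleton_self _)
    have hω' : cs.IsReduced ω := by simpa only [List.take_left] using hω.take ω.length
    rw [cs.wordProd_append, cs.wordProd_singleton] at hmem
    exact List.forall_mem_append.mpr
      ⟨ih hω' ((H.mul_mem_cancel_right hi).mp hmem), List.forall_mem_singleton.mpr hi⟩

theorem IsInversionClosed.le_standardParabolic (hH : IsInversionClosed cs H)
    (hle : H ≤ standardParabolic cs J) :
    H ≤ standardParabolic cs {i ∈ J | cs.simple i ∈ H} := by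
  intro g hg
  obtain ⟨ω, hωJ, hω, rfl⟩ := exists_isReduced_of_mem_standardParabolic cs (hle hg)
  exact wordProd_mem_standardParabolic cs fun i hi =>
    ⟨hωJ i hi, hH.simple_mem_of_isReduced hω hg i hi⟩

theorem eq_one_or_eq_simple_of_mem_standardParabolic {g : W} {i : B}
    (hg : g ∈ standardParabolic cs {i}) : g = 1 ∨ g = cs.simple i := by
  rw [standardParabolic, Set.image_singleton, Subgroup.mem_closure_singleton] at hg
  obtain ⟨n, rfl⟩ := hg
  rcases n.even_or_odd' with ⟨c, rfl | rfl⟩ <;>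
    simp [zpow_add, zpow_mul, zpow_ofNat]

theorem IsInversionClosed.standardParabolic_pair_le (hH : IsInversionClosed cs H) {k l : B}
    (hle : H ≤ standardParabolic cs {k, l}) {t₁ t₂ : W} (hne : t₁ ≠ t₂) (h₁ : t₁ ≠ 1)
    (h₂ : t₂ ≠ 1) (ht₁ : t₁ ∈ H) (ht₂ : t₂ ∈ H) : standardParabolic cs {k, l} ≤ H := by
  have not_subset (m : B) : ¬ {i ∈ ({k, l} : Set B) | cs.simple i ∈ H} ⊆ {m} := by
    intro hsub
    have hm {t : W} (ht : t ∈ H) (h1 : t ≠ 1) : t = cs.simple m :=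
      (eq_one_or_eq_simple_of_mem_standardParabolic (Subgroup.closure_mono (Set.image_mono hsub)
        (hH.le_standardParabolic hle ht))).resolve_left h1
    exact hne ((hm ht₁ h₁).trans (hm ht₂ h₂).symm)
  have hk : cs.simple k ∈ H := by
    by_contra hk
    refine not_subset l ?_
    rintro i ⟨rfl | rfl, hi⟩
    exacts [absurd hi hk, rfl]
  have hl : cs.simple l ∈ H := by
    by_contra hl
    refine not_subset k ?_
    rintro i ⟨rfl | rfl, hi⟩
    exacts [rfl, absurd hi hl]
  rw [standardParabolic, Subgroup.closure_le, Set.image_pair]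
  exact Set.pair_subset hk hl

theorem IsInversionClosed.inf_conj (hH : IsInversionClosed cs H) (hK : IsInversionClosed cs K)
    {z : W} (hz : ∀ t ∈ H, ¬ cs.IsRightInversion z t) :
    IsInversionClosed cs (H ⊓ (MulAut.conj z)⁻¹ • K) := by
  rintro g ⟨hgH, hgK⟩ t ht
  have htH : t ∈ H := hH g hgH t ht
  have hzero {s : W} (hs : s ∈ H) : inversionParity cs z s = 0 := by
    by_contra h
    exact hz s hs ((isRightInversion_iff_inversionParity_ne_zero cs).mpr h)
  have hconj : inversionParity cs (z * g * z⁻¹) (z * t * z⁻¹) = inversionParity cs g t := by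
    rw [inversionParity_conj, hzero htH, hzero (mul_mem (mul_mem hgH htH) (inv_mem hgH)), add_zero,
      add_zero]
  refine ⟨htH, Subgroup.mem_inv_pointwise_smul_iff.mpr (hK _
    (Subgroup.mem_inv_pointwise_smul_iff.mp hgK) _ ?_)⟩
  rw [isRightInversion_iff_inversionParity_ne_zero] at ht ⊢
  rwa [MulAut.smul_def, MulAut.conj_apply, MulAut.smul_def, MulAut.conj_apply, hconj]

variable (cs)

theorem exists_mem_forall_not_isRightInversion_mul (H : Subgroup W) (z : W) :
    ∃ u ∈ H, ∀ t ∈ H, ¬ cs.IsRightInversion (z * u) t := by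
  obtain ⟨u, hu, hmin⟩ :=
    (measure fun u => cs.length (z * u)).wf.has_min (H : Set W) ⟨1, H.one_mem⟩
  refine ⟨u, hu, fun t ht hinv => hmin (u * t) (H.mul_mem hu ht) ?_⟩
  change cs.length (z * (u * t)) < cs.length (z * u)
  rw [← mul_assoc]
  exact hinv.2

theorem smul_standardParabolic_pair_le (x y : W) {k l : B} {t₁ t₂ : W} (hne : t₁ ≠ t₂)
    (h₁ : t₁ ≠ 1) (h₂ : t₂ ≠ 1)
    (ht₁ : t₁ ∈
      MulAut.conj x • standardParabolic cs {k, l} ⊓ MulAut.conj y • standardParabolic cs J)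
    (ht₂ : t₂ ∈
      MulAut.conj x • standardParabolic cs {k, l} ⊓ MulAut.conj y • standardParabolic cs J) :
    MulAut.conj x • standardParabolic cs {k, l} ≤ MulAut.conj y • standardParabolic cs J := by
  obtain ⟨u, hu, hmin⟩ :=
    exists_mem_forall_not_isRightInversion_mul cs (standardParabolic cs {k, l}) (y⁻¹ * x)
  have hclosed := (isInversionClosed_standardParabolic cs {k, l}).inf_conj
    (isInversionClosed_standardParabolic cs J) hmin
  -- Passing from `x` to `x * u` keeps the conjugate of `standardParabolic cs {k, l}` and makes the
  -- intersection a conjugate of an inversion-closed subgroup.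
  have hxu : MulAut.conj x • standardParabolic cs {k, l} =
      MulAut.conj (x * u) • standardParabolic cs {k, l} := by
    rw [map_mul, mul_smul, Subgroup.conj_smul_eq_self_of_mem hu]
  have hinter : MulAut.conj x • standardParabolic cs {k, l} ⊓ MulAut.conj y • standardParabolic cs J
      = MulAut.conj (x * u) • (standardParabolic cs {k, l} ⊓
        (MulAut.conj (y⁻¹ * x * u))⁻¹ • standardParabolic cs J) := by
    rw [Subgroup.smul_inf, hxu, smul_smul, ← map_inv, ← map_mul]
    congr 3
    group
  rw [hinter, Subgroup.mem_pointwise_smul_iff_inv_smul_mem] at ht₁ ht₂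
  have hsmul {t : W} (ht : t ≠ 1) : (MulAut.conj (x * u))⁻¹ • t ≠ 1 := by
    rwa [Ne, inv_smul_eq_iff, smul_one]
  have hle := hclosed.standardParabolic_pair_le inf_le_left ((MulAction.injective _).ne hne)
    (hsmul h₁) (hsmul h₂) ht₁ ht₂
  rw [← inf_eq_left, hinter, hxu]
  exact congrArg _ (le_antisymm inf_le_left hle)

end StandardParabolic
section NSet

open scoped Pointwise

variable {B W : Type*} [Group W] {M : CoxeterMatrix B} {cs : CoxeterSystem M W} {p r : W × W}

theorem isReflection_fst_of_mem_NSet (hp : p ∈ NSet cs) : cs.IsReflection p.1 := by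
  obtain ⟨x, k, l, -, -, h₁, -⟩ := hp
  exact ⟨x, k, h₁⟩

theorem isReflection_snd_of_mem_NSet (hp : p ∈ NSet cs) : cs.IsReflection p.2 := by
  obtain ⟨x, k, l, -, -, -, h₂⟩ := hp
  exact ⟨x, l, h₂⟩

theorem orderOf_mul_pos_of_mem_NSet (hp : p ∈ NSet cs) : 0 < orderOf (p.1 * p.2) := by
  obtain ⟨x, k, l, -, hM, h₁, h₂⟩ := hp
  refine orderOf_pos_iff.mpr (isOfFinOrder_iff_pow_eq_one.mpr ⟨M k l, Nat.pos_of_ne_zero hM, ?_⟩)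
  rw [h₁, h₂, conj_mul, conj_pow, cs.simple_mul_simple_pow, mul_one, mul_inv_cancel]

theorem exists_closure_eq_smul_standardParabolic (hp : p ∈ NSet cs) :
    ∃ (x : W) (k l : B),
      Subgroup.closure {p.1, p.2} = MulAut.conj x • standardParabolic cs {k, l} := by
  obtain ⟨x, k, l, -, -, h₁, h₂⟩ := hp
  refine ⟨x, k, l, ?_⟩
  rw [standardParabolic, Subgroup.smul_closure, Set.image_pair, Set.smul_set_insert,
    Set.smul_set_singleton, h₁, h₂]
  rfl

theorem closure_pair_le_of_mem_NSet (hp : p ∈ NSet cs) (hr : r ∈ NSet cs) {t₁ t₂ : W}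
    (hne : t₁ ≠ t₂) (h₁ : t₁ ≠ 1) (h₂ : t₂ ≠ 1)
    (ht₁ : t₁ ∈ Subgroup.closure {p.1, p.2} ⊓ Subgroup.closure {r.1, r.2})
    (ht₂ : t₂ ∈ Subgroup.closure {p.1, p.2} ⊓ Subgroup.closure {r.1, r.2}) :
    Subgroup.closure {p.1, p.2} ≤ Subgroup.closure {r.1, r.2} := by
  obtain ⟨x, k, l, hx⟩ := exists_closure_eq_smul_standardParabolic hp
  obtain ⟨y, i, j, hy⟩ := exists_closure_eq_smul_standardParabolic hr
  rw [hx, hy] at ht₁ ht₂ ⊢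
  exact smul_standardParabolic_pair_le cs x y hne h₁ h₂ ht₁ ht₂

variable (cs) in
theorem isReflection_of_mem_rhoWord {u v g : W} (hu : cs.IsReflection u) (hv : cs.IsReflection v)
    {m : ℕ} (hg : g ∈ rhoWord u v m) : cs.IsReflection g := by
  have hpow (k : ℕ) : cs.IsReflection ((u * v) ^ k * u) := by
    induction k using Nat.twoStepInduction with
    | zero => simpa only [pow_zero, one_mul] using hu
    | one => simpa only [pow_one, hu.inv] using hv.conj u
    | more k ih _ =>
      have hconj : u * v * ((u * v) ^ k * u) * (u * v)⁻¹ = (u * v) ^ (k + 2) * u := by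
        rw [mul_inv_rev, hu.inv, hv.inv, pow_succ, pow_succ']
        simp only [mul_assoc]
      exact hconj ▸ ih.conj (u * v)
  obtain ⟨k, -, rfl⟩ := List.mem_map.mp hg
  exact hpow k

theorem not_isReflection_zpow_mul {u v : W} (hu : cs.IsReflection u) (hv : cs.IsReflection v)
    (c : ℤ) : ¬ cs.IsReflection ((u * v) ^ c) := by
  have hodd {t : W} (ht : cs.IsReflection t) : cs.lengthParity t = Multiplicative.ofAdd 1 := by
    obtain ⟨x, i, rfl⟩ := ht
    rw [map_mul, map_mul, map_inv, cs.lengthParity_simple, mul_inv_cancel_comm]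
  intro h
  have hone : cs.lengthParity ((u * v) ^ c) = 1 := by
    rw [map_zpow, map_mul, hodd hu, hodd hv, ← ofAdd_add, CharTwo.add_self_eq_zero, ofAdd_zero,
      one_zpow]
  rw [hodd h] at hone
  exact absurd hone (by decide)

theorem mem_rho_iff (hp : p ∈ NSet cs) {g : W} :
    g ∈ rho p ↔ cs.IsReflection g ∧ g ∈ Subgroup.closure {p.1, p.2} := by
  have hu := isReflection_fst_of_mem_NSet hp
  have hv := isReflection_snd_of_mem_NSet hp
  constructor
  · intro hg
    refine ⟨isReflection_of_mem_rhoWord cs hu hv hg, ?_⟩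
    obtain ⟨k, -, rfl⟩ := List.mem_map.mp hg
    have hfst : p.1 ∈ Subgroup.closure {p.1, p.2} := Subgroup.subset_closure (.inl rfl)
    have hsnd : p.2 ∈ Subgroup.closure {p.1, p.2} := Subgroup.subset_closure (.inr rfl)
    exact mul_mem (pow_mem (mul_mem hfst hsnd) k) hfst
  · rintro ⟨hg, hmem⟩
    obtain ⟨c, rfl | rfl⟩ := exists_zpow_of_mem_closure_pair hu.inv hv.inv hmem
    · exact absurd hg (not_isReflection_zpow_mul hu hv c)
    · have hpos : (0 : ℤ) < orderOf (p.1 * p.2) := mod_cast orderOf_mul_pos_of_mem_NSet hp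
      have hmod := Int.emod_lt_of_pos c hpos
      obtain ⟨k, hk⟩ := Int.eq_ofNat_of_zero_le (Int.emod_nonneg c hpos.ne')
      rw [hk] at hmod
      refine List.mem_map.mpr ⟨k, List.mem_range.mpr (mod_cast hmod), ?_⟩
      rw [← zpow_mod_orderOf, hk, zpow_natCast]

theorem mem_rho_iff_mem_rho_of_shared (hp : p ∈ NSet cs) (hr : r ∈ NSet cs) {t₁ t₂ : W}
    (hne : t₁ ≠ t₂) (hp₁ : t₁ ∈ rho p) (hr₁ : t₁ ∈ rho r) (hp₂ : t₂ ∈ rho p) (hr₂ : t₂ ∈ rho r)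
    (g : W) : g ∈ rho p ↔ g ∈ rho r := by
  rw [mem_rho_iff hp] at hp₁ hp₂ ⊢
  rw [mem_rho_iff hr] at hr₁ hr₂ ⊢
  have hne_one {t : W} (ht : cs.IsReflection t) : t ≠ 1 := by
    rintro rfl
    simpa using ht.odd_length
  have h₁ := hne_one hp₁.1
  have h₂ := hne_one hp₂.1
  rw [le_antisymm
    (closure_pair_le_of_mem_NSet hp hr hne h₁ h₂ ⟨hp₁.2, hr₁.2⟩ ⟨hp₂.2, hr₂.2⟩)
    (closure_pair_le_of_mem_NSet hr hp hne h₁ h₂ ⟨hr₁.2, hp₁.2⟩ ⟨hr₂.2, hp₂.2⟩)]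

end NSet

section FactorReversal

variable {α : Type*}

theorem sublist_append_reverse_append {E X D Y : List α} (hE : E.Nodup)
    (hshared : ∀ x ∈ E, x ∈ D → ∀ y ∈ E, y ∈ D → x = y) (h : E.Sublist (X ++ D ++ Y)) :
    E.Sublist (X ++ D.reverse ++ Y) := by
  obtain ⟨E₁₂, E₃, rfl, h₁₂, h₃⟩ := List.sublist_append_iff.mp h
  obtain ⟨E₁, E₂, rfl, h₁, h₂⟩ := List.sublist_append_iff.mp h₁₂
  refine (h₁.append ?_).append h₃
  match E₂, h₂ with
  | [], _ => exact List.nil_sublist _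
  | [x], h₂ =>
    exact List.singleton_sublist.mpr (List.mem_reverse.mpr (List.singleton_sublist.mp h₂))
  | x :: y :: E', h₂ =>
    have hxy : x = y := hshared x (by simp) (h₂.subset (by simp)) y (by simp) (h₂.subset (by simp))
    simp [hxy, List.nodup_append] at hE

theorem sublist_append_reverse_append_iff {E X D Y : List α} (hE : E.Nodup)
    (hshared : ∀ x ∈ E, x ∈ D → ∀ y ∈ E, y ∈ D → x = y) :
    E.Sublist (X ++ D.reverse ++ Y) ↔ E.Sublist (X ++ D ++ Y) := by
  refine ⟨fun h => ?_, sublist_append_reverse_append hE hshared⟩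
  simpa only [List.reverse_reverse] using
    sublist_append_reverse_append hE (by simpa only [List.mem_reverse] using hshared) h

theorem sublist_append_append_iff_eq {E X D Y : List α} (hL : (X ++ D ++ Y).Nodup) (hE : E.Nodup)
    (hmem : ∀ x, x ∈ E ↔ x ∈ D) : E.Sublist (X ++ D ++ Y) ↔ E = D := by
  have hD : D.Sublist (X ++ D ++ Y) :=
    (List.sublist_append_right X D).trans (List.sublist_append_left _ Y)
  have hperm : E.Perm D := (List.perm_ext_iff_of_nodup hE (hD.nodup hL)).mpr hmem
  exact ⟨fun h => (hL.perm_iff_eq_of_sublist h hD).mp hperm, fun h => h ▸ hD⟩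

end FactorReversal

section HasWord

variable {B W : Type*} [Group W] {M : CoxeterMatrix B} (cs : CoxeterSystem M W)

/-- The map `p ↦ has_p L` for an arbitrary word `L` in a group, in place of the inversion word of
a reduced expression; `HasFn cs ω` is `hasWord (cs.leftInvSeq ω)`. -/
noncomputable def hasWord (L : List W) : W × W → ℤ :=
  fun p => if (rho p).Sublist L then 1 else 0

variable {cs} in
theorem hasWord_reverse_rho {p r : W × W} (hp : p ∈ NSet cs) (hr : r ∈ NSet cs) {X Y : List W}
    (hL : (X ++ rho r ++ Y).Nodup) :
    hasWord (X ++ (rho r).reverse ++ Y) p =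
      hasWord (X ++ rho r ++ Y) p - (if p = r then 1 else 0) + (if p = r.swap then 1 else 0) := by
  have hinj {p' : W × W} : rho p = rho p' ↔ p = p' :=
    ⟨eq_of_rho_eq (orderOf_mul_pos_of_mem_NSet hp), congrArg rho⟩
  have hswap : rho r.swap = (rho r).reverse :=
    rho_swap (isReflection_fst_of_mem_NSet hr).inv (isReflection_snd_of_mem_NSet hr).inv
  have hinj_swap : rho p = (rho r).reverse ↔ p = r.swap := by rw [← hswap, hinj]
  by_cases hmem : ∀ g, g ∈ rho p ↔ g ∈ rho r
  · have hL' : (X ++ (rho r).reverse ++ Y).Nodup := by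
      refine (List.Perm.nodup_iff ?_).mpr hL
      exact ((List.reverse_perm _).append_left X).append_right Y
    simp only [hasWord, sublist_append_append_iff_eq hL (nodup_rho p) hmem,
      sublist_append_append_iff_eq hL' (nodup_rho p) (by simpa only [List.mem_reverse] using hmem),
      hinj, hinj_swap, sub_self, zero_add]
  · have hshared : ∀ x ∈ rho p, x ∈ rho r → ∀ y ∈ rho p, y ∈ rho r → x = y := by
      intro x hxp hxr y hyp hyr
      by_contra hne
      exact hmem (mem_rho_iff_mem_rho_of_shared hp hr hne hxp hxr hyp hyr)
    have hpr : p ≠ r := fun h => hmem fun _ => by rw [h]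
    have hpr' : p ≠ r.swap := fun h => hmem fun _ => by rw [h, hswap, List.mem_reverse]
    simp only [hasWord, sublist_append_reverse_append_iff (nodup_rho p) hshared, if_neg hpr,
      if_neg hpr', sub_zero, add_zero]

theorem has_of_braid_move_general {i j : B} (hij : i ≠ j) (hfin : M.M i j ≠ 0) {L L' : List W}
    (hL : L.Nodup) (q : W)
    (hrepl : ∃ X Y : List W,
      L = X ++ (rhoWord (cs.simple i) (cs.simple j) (M.M i j)).map (fun x => q * x * q⁻¹) ++ Y ∧
      L' = X ++ ((rhoWord (cs.simple i) (cs.simple j) (M.M i j)).map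
        (fun x => q * x * q⁻¹)).reverse ++ Y) :
    ∀ p ∈ NSet cs,
      hasWord L' p = hasWord L p
        - (if p = (q * cs.simple i * q⁻¹, q * cs.simple j * q⁻¹) then 1 else 0)
        + (if p = (q * cs.simple j * q⁻¹, q * cs.simple i * q⁻¹) then 1 else 0) := by
  obtain ⟨X, Y, rfl, rfl⟩ := hrepl
  intro p hp
  rw [map_conj_rhoWord] at hL ⊢
  have hpow : (q * cs.simple i * q⁻¹ * (q * cs.simple j * q⁻¹)) ^ M.M i j = 1 := by
    rw [conj_mul, conj_pow, cs.simple_mul_simple_pow, mul_one, mul_inv_cancel]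
  have horder := orderOf_mul_of_nodup_rhoWord hfin hpow hL.of_append_left.of_append_right
  have hr : (q * cs.simple i * q⁻¹, q * cs.simple j * q⁻¹) ∈ NSet cs :=
    ⟨q, i, j, hij, hfin, rfl, rfl⟩
  rw [← horder] at hL ⊢
  exact hasWord_reverse_rho hp hr hL

end HasWord

/-- If the reduced expression `b` of `w` is obtained from `a` by an
`(s,t)`-braid move, and `q ∈ W` is such that `Invs b` is obtained from `Invs a` by
replacing a factor equal to `q ρ_{s,t} q⁻¹` by its reversal, then, with `s' = qsq⁻¹`,
`t' = qtq⁻¹`, one has `Has b = Has a − (s',t') + (t',s')` in `ℤ[𝔑]`. -/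
theorem has_of_braid_move {B W : Type*} [Group W] {M : CoxeterMatrix B}
    (cs : CoxeterSystem M W) (w : W) (i j : B) (hij : i ≠ j) (hfin : M.M i j ≠ 0)
    (a b : List B)
    (ha : cs.IsReduced a) (haw : cs.wordProd a = w)
    (hb : cs.IsReduced b) (hbw : cs.wordProd b = w)
    (hmove : IsBraidMove cs i j a b)
    (q : W)
    (hrepl : ∃ X Y : List W,
      cs.leftInvSeq a = X ++ (rhoWord (cs.simple i) (cs.simple j) (M.M i j)).map
        (fun x => q * x * q⁻¹) ++ Y ∧
      cs.leftInvSeq b = X ++ ((rhoWord (cs.simple i) (cs.simple j) (M.M i j)).map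
        (fun x => q * x * q⁻¹)).reverse ++ Y) :
    ∀ p ∈ NSet cs,
      HasFn cs b p = HasFn cs a p
        - (if p = (q * cs.simple i * q⁻¹, q * cs.simple j * q⁻¹) then 1 else 0)
        + (if p = (q * cs.simple j * q⁻¹, q * cs.simple i * q⁻¹) then 1 else 0) := by
  exact has_of_braid_move_general cs hij hfin ha.nodup_leftInvSeq q hrepl
end

section
/- Let (W,S) be a Coxeter group and w ∈ W. Consider the directed graph R(w) whose vertices are the reduced expressions for w, with an arc colored [(s,t)] from →a to →b whenever →b is obtained from →a by an (s,t)-braid move, where [(s,t)] is the equivalence class of (s,t) under simultaneous conjugation. Let C be a directed cycle in R(w) and let c = [(s,t)] be a color, with opposite color c^op = [(t,s)]. Then the number of arcs of C colored c equals the number of arcs of C colored c^op. -/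
open scoped Classical

/-- Simultaneous conjugacy of pairs of simple reflections: `(s_i, s_j) ∼ (s_{i'}, s_{j'})`
iff some `q ∈ W` conjugates `s_i` to `s_{i'}` and `s_j` to `s_{j'}`. The arc of a braid
move `(s_i, s_j)` is colored by the `∼`-class of `(s_i, s_j)`. -/
def SimConj {B W : Type*} [Group W] {M : CoxeterMatrix B}
    (cs : CoxeterSystem M W) (p p' : B × B) : Prop :=
  ∃ q : W, q * cs.simple p.1 * q⁻¹ = cs.simple p'.1 ∧
    q * cs.simple p.2 * q⁻¹ = cs.simple p'.2

/-!
The left inversion sequence of a reduced expression is a list of distinct reflections, and a braid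
move replaces a block `(u, uvu, …, v)` of it, the reflections of a finite dihedral group, by its
reversal. Consider the pairs `(x, y)` whose dihedral sequence `(x, xyx, …, y)` is a subsequence of
the list. If two neighbours in such a subsequence lie in the block, then so does all of it, since
two neighbours generate the dihedral group; otherwise the subsequence survives the reversal. Hence,
among the pairs whose dihedral sequence is maximal for inclusion, the move exchanges `(u, v)` for
`(v, u)` and changes nothing else. As `(u, v)` is conjugate to the pair of simple reflections of the
move, the number of maximal pairs in a given conjugacy class drops by one on each arc coloured by
that class and grows by one on each arc of the opposite colour. On a cycle the total change is zero.
-/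

section ListLemmas

variable {α : Type*} {l P Q S : List α}

theorem sublist_append_reverse_append_or_exists_consecutive (h : l.Sublist (P ++ Q ++ S)) :
    l.Sublist (P ++ Q.reverse ++ S) ∨
      ∃ A r r' C, l = A ++ r :: r' :: C ∧ r ∈ Q ∧ r' ∈ Q := by
  obtain ⟨l₁₂, l₃, rfl, h₁₂, h₃⟩ := List.sublist_append_iff.1 h
  obtain ⟨l₁, l₂, rfl, h₁, h₂⟩ := List.sublist_append_iff.1 h₁₂
  match l₂, h₂ with
  | [], _ => exact .inl ((h₁.append (List.nil_sublist _)).append h₃)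
  | [r], hr =>
    have hr' : [r].Sublist Q.reverse := by simpa using hr
    exact .inl ((h₁.append hr').append h₃)
  | r :: r' :: C, hC =>
    exact .inr ⟨l₁, r, r', C ++ l₃, by simp, hC.subset (by simp), hC.subset (by simp)⟩

theorem isInfix_of_sublist_of_subset (hnd : (P ++ Q ++ S).Nodup)
    (hl : l.Sublist (P ++ Q ++ S)) (hQ : Q ⊆ l) : Q <:+: l := by
  obtain ⟨hPQ, -, hS⟩ := List.nodup_append.1 hnd
  obtain ⟨-, hQnd, hP⟩ := List.nodup_append.1 hPQ
  obtain ⟨l₁₂, l₃, rfl, h₁₂, h₃⟩ := List.sublist_append_iff.1 hl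
  obtain ⟨l₁, l₂, rfl, h₁, h₂⟩ := List.sublist_append_iff.1 h₁₂
  have hQl₂ : Q ⊆ l₂ := by
    intro z hz
    have hz₁ : z ∉ l₁ := fun h => hP z (h₁.subset h) z hz rfl
    have hz₃ : z ∉ l₃ := fun h => hS z (List.mem_append_right _ hz) z (h₃.subset h) rfl
    simpa [hz₁, hz₃] using hQ hz
  obtain rfl : l₂ = Q := h₂.eq_of_length_le (hQnd.subperm hQl₂).length_le
  exact ⟨l₁, l₃, rfl⟩

end ListLemmas

section Dihedral

variable {W : Type*} [Group W] {x y u v r r' z : W}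

/-- Two elements with square `1` whose product has finite order at least `2`: in the application,
two distinct reflections generating a finite dihedral group. As `orderOf` is `0` at elements of
infinite order, the last field also says that the order is finite. -/
structure IsDihedralPair (x y : W) : Prop where
  left_mul_self : x * x = 1
  right_mul_self : y * y = 1
  one_lt_orderOf : 1 < orderOf (x * y)

/-- The list `x, xyx, xyxyx, …, y` of the reflections of the dihedral group generated by a dihedral
pair `x, y`, in the order in which they occur in the inversion sequence of `x, y, x, …`. -/
noncomputable def dihedralSeq (x y : W) : List W :=
  (List.range (orderOf (x * y))).map fun k => (x * y) ^ k * x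

theorem length_dihedralSeq (x y : W) : (dihedralSeq x y).length = orderOf (x * y) := by
  simp [dihedralSeq]

theorem map_dihedralSeq {W' : Type*} [Group W'] (e : W ≃* W') (x y : W) :
    (dihedralSeq x y).map e = dihedralSeq (e x) (e y) := by
  rw [dihedralSeq, dihedralSeq, ← map_mul, MulEquiv.orderOf_eq, List.map_map]
  exact List.map_congr_left fun k _ => by simp only [Function.comp_apply, map_mul, map_pow]

theorem dihedralSeq_eq_cons_cons (h : 1 < orderOf (x * y)) :
    ∃ C, dihedralSeq x y = x :: x * y * x :: C := by
  obtain ⟨m, hm⟩ := Nat.exists_eq_add_of_lt h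
  rw [dihedralSeq, hm, Nat.add_comm 1, List.range_succ_eq_map, List.range_succ_eq_map]
  simp

namespace IsDihedralPair

theorem mul_swap_eq_inv (h : IsDihedralPair x y) : y * x = (x * y)⁻¹ := by
  rw [mul_inv_rev, inv_eq_of_mul_eq_one_left h.left_mul_self,
    inv_eq_of_mul_eq_one_left h.right_mul_self]

protected theorem symm (h : IsDihedralPair x y) : IsDihedralPair y x where
  left_mul_self := h.right_mul_self
  right_mul_self := h.left_mul_self
  one_lt_orderOf := by rw [h.mul_swap_eq_inv, orderOf_inv]; exact h.one_lt_orderOf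

protected theorem map {W' : Type*} [Group W'] (h : IsDihedralPair x y) (e : W ≃* W') :
    IsDihedralPair (e x) (e y) where
  left_mul_self := by rw [← map_mul, h.left_mul_self, map_one]
  right_mul_self := by rw [← map_mul, h.right_mul_self, map_one]
  one_lt_orderOf := by rw [← map_mul, MulEquiv.orderOf_eq]; exact h.one_lt_orderOf

theorem isOfFinOrder (h : IsDihedralPair x y) : IsOfFinOrder (x * y) :=
  orderOf_pos_iff.1 (zero_lt_one.trans h.one_lt_orderOf)

theorem mem_dihedralSeq_iff (h : IsDihedralPair x y) :
    z ∈ dihedralSeq x y ↔ ∃ k : ℤ, (x * y) ^ k * x = z := by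
  have hpow := h.isOfFinOrder.mem_zpowers_iff_mem_range_orderOf (y := z * x⁻¹)
  simpa [dihedralSeq, Subgroup.mem_zpowers_iff, eq_mul_inv_iff_mul_eq] using hpow.symm

theorem left_mem_dihedralSeq (h : IsDihedralPair x y) : x ∈ dihedralSeq x y :=
  h.mem_dihedralSeq_iff.2 ⟨0, by simp⟩

theorem zpow_mul_left_mul_zpow_mul_left (h : IsDihedralPair x y) (a b : ℤ) :
    (x * y) ^ a * x * ((x * y) ^ b * x) = (x * y) ^ (a - b) := by
  have hx : x⁻¹ = x := inv_eq_of_mul_eq_one_left h.left_mul_self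
  have hconj : x * (x * y) ^ b * x = (x * y) ^ (-b) := calc
    x * (x * y) ^ b * x = (x * (x * y) * x⁻¹) ^ b := by rw [conj_zpow, hx]
    _ = (y * x) ^ b := by rw [← mul_assoc x x y, h.left_mul_self, one_mul, hx]
    _ = (x * y) ^ (-b) := by rw [h.mul_swap_eq_inv, inv_zpow']
  rw [sub_eq_add_neg, zpow_add, ← hconj]
  simp only [mul_assoc]

theorem dihedralSeq_swap (h : IsDihedralPair x y) :
    dihedralSeq y x = (dihedralSeq x y).reverse := by
  have hlen : (dihedralSeq y x).length = (dihedralSeq x y).length := by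
    rw [length_dihedralSeq, length_dihedralSeq, h.mul_swap_eq_inv, orderOf_inv]
  have hy : y = (x * y)⁻¹ * x := by
    rw [← h.mul_swap_eq_inv, mul_assoc, h.left_mul_self, mul_one]
  refine List.ext_getElem (by simpa using hlen) fun k hk _ => ?_
  rw [hlen, length_dihedralSeq] at hk
  have hpow : (y * x) ^ k * y = (x * y) ^ (orderOf (x * y) - 1 - k) * x := calc
    (y * x) ^ k * y = ((x * y)⁻¹) ^ (k + 1) * x := by
      rw [h.mul_swap_eq_inv, pow_succ, mul_assoc, ← hy]
    _ = (x * y) ^ (orderOf (x * y) - 1 - k) * x := by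
      rw [inv_pow, inv_eq_of_mul_eq_one_right (b := (x * y) ^ (orderOf (x * y) - 1 - k))]
      rw [← pow_add, show k + 1 + (orderOf (x * y) - 1 - k) = orderOf (x * y) by omega,
        pow_orderOf_eq_one]
  simpa [dihedralSeq] using hpow

theorem isChain_dihedralSeq (h : IsDihedralPair x y) :
    (dihedralSeq x y).IsChain fun r r' => r' * r = x * y := by
  refine List.isChain_iff_getElem.2 fun k _ => ?_
  have hmul := h.zpow_mul_left_mul_zpow_mul_left ((k + 1 : ℕ) : ℤ) k
  rw [zpow_natCast, zpow_natCast] at hmul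
  simp [dihedralSeq, hmul]

theorem mul_eq_of_consecutive (h : IsDihedralPair x y) {A C : List W}
    (hseq : dihedralSeq x y = A ++ r :: r' :: C) : r' * r = x * y :=
  by
  have hchain := h.isChain_dihedralSeq
  rw [hseq] at hchain
  exact (List.isChain_append_cons_cons.1 hchain).2.1

/-- Two neighbours `r, r'` of the dihedral sequence determine `r' * r = x * y`, hence the whole
sequence, whose entries are `(x * y) ^ k * r`. -/
theorem dihedralSeq_subset_of_consecutive (h : IsDihedralPair x y) (huv : IsDihedralPair u v)
    {A C : List W} (hseq : dihedralSeq x y = A ++ r :: r' :: C)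
    (hr : r ∈ dihedralSeq u v) (hr' : r' ∈ dihedralSeq u v) :
    dihedralSeq x y ⊆ dihedralSeq u v := by
  obtain ⟨a, ha⟩ := huv.mem_dihedralSeq_iff.1 hr
  obtain ⟨b, hb⟩ := huv.mem_dihedralSeq_iff.1 hr'
  obtain ⟨c, hc⟩ := h.mem_dihedralSeq_iff.1 (show r ∈ dihedralSeq x y by simp [hseq])
  have hxy : x * y = (u * v) ^ (b - a) := by
    rw [← huv.zpow_mul_left_mul_zpow_mul_left, ha, hb, h.mul_eq_of_consecutive hseq]
  intro z hz
  obtain ⟨k, rfl⟩ := h.mem_dihedralSeq_iff.1 hz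
  refine huv.mem_dihedralSeq_iff.2 ⟨(b - a) * (k - c) + a, ?_⟩
  calc (u * v) ^ ((b - a) * (k - c) + a) * u
      = (x * y) ^ (k - c) * r := by rw [zpow_add, zpow_mul, ← hxy, mul_assoc, ha]
    _ = (x * y) ^ k * x := by rw [← hc, ← mul_assoc, ← zpow_add, sub_add_cancel]

theorem eq_of_dihedralSeq_isInfix (h : IsDihedralPair x y) (huv : IsDihedralPair u v)
    (hsub : dihedralSeq u v <:+: dihedralSeq x y) : x = u ∧ y = v := by
  obtain ⟨D, hD⟩ := dihedralSeq_eq_cons_cons huv.one_lt_orderOf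
  have huvxy : u * v = x * y := by
    obtain ⟨A, C, hAC⟩ := hsub
    have hseq : dihedralSeq x y = A ++ u :: u * v * u :: (D ++ C) := by simp [← hAC, hD]
    rw [← h.mul_eq_of_consecutive hseq, mul_assoc, huv.left_mul_self, mul_one]
  have heq : dihedralSeq u v = dihedralSeq x y :=
    hsub.eq_of_length (by rw [length_dihedralSeq, length_dihedralSeq, huvxy])
  obtain ⟨E, hE⟩ := dihedralSeq_eq_cons_cons h.one_lt_orderOf
  obtain rfl : u = x := (List.cons.inj (hD.symm.trans (heq.trans hE))).1
  exact ⟨rfl, (mul_left_cancel huvxy).symm⟩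

end IsDihedralPair

theorem orderOf_eq_of_nodup {m : ℕ} (hm : 0 < m) (hpow : (x * y) ^ m = 1)
    (hnd : ((List.range m).map fun k => (x * y) ^ k * x).Nodup) : orderOf (x * y) = m := by
  refine (orderOf_eq_iff hm).2 ⟨hpow, fun k hk hk₀ hone => hk₀.ne' ?_⟩
  exact List.inj_on_of_nodup_map hnd (List.mem_range.2 hk) (List.mem_range.2 hm) (by simp [hone])

/-- The dihedral pairs `(x, y)` whose dihedral sequence is a subsequence of `L`. -/
noncomputable def dihedralPairs (L : List W) : Finset (W × W) :=
  (L.toFinset ×ˢ L.toFinset).filter fun p =>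
    IsDihedralPair p.1 p.2 ∧ (dihedralSeq p.1 p.2).Sublist L

/-- The dihedral pairs of `L` whose set of reflections is not contained in that of another dihedral
pair of `L`. -/
noncomputable def maximalDihedralPairs (L : List W) : Finset (W × W) :=
  (dihedralPairs L).filter fun p =>
    ∀ p' ∈ dihedralPairs L, dihedralSeq p.1 p.2 ⊆ dihedralSeq p'.1 p'.2 → p' = p

variable {P S : List W} {p : W × W}

theorem mem_dihedralPairs {L : List W} :
    p ∈ dihedralPairs L ↔ IsDihedralPair p.1 p.2 ∧ (dihedralSeq p.1 p.2).Sublist L := by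
  simp only [dihedralPairs, Finset.mem_filter, Finset.mem_product, List.mem_toFinset,
    and_iff_right_iff_imp]
  rintro ⟨h, hL⟩
  have hright : p.2 ∈ dihedralSeq p.1 p.2 := by
    simpa [h.dihedralSeq_swap] using h.symm.left_mem_dihedralSeq
  exact ⟨hL.subset h.left_mem_dihedralSeq, hL.subset hright⟩

theorem mem_maximalDihedralPairs {L : List W} :
    p ∈ maximalDihedralPairs L ↔ p ∈ dihedralPairs L ∧
      ∀ p' ∈ dihedralPairs L, dihedralSeq p.1 p.2 ⊆ dihedralSeq p'.1 p'.2 → p' = p :=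
  Finset.mem_filter

namespace IsDihedralPair

theorem mem_dihedralPairs_block (h : IsDihedralPair u v) (P S : List W) :
    (u, v) ∈ dihedralPairs (P ++ dihedralSeq u v ++ S) :=
  mem_dihedralPairs.2
    ⟨h, (List.sublist_append_right _ _).trans (List.sublist_append_left _ _)⟩

theorem mem_dihedralPairs_swap_or_subset (h : IsDihedralPair u v)
    (hp : p ∈ dihedralPairs (P ++ dihedralSeq u v ++ S)) :
    p ∈ dihedralPairs (P ++ dihedralSeq v u ++ S) ∨
      dihedralSeq p.1 p.2 ⊆ dihedralSeq u v := by
  obtain ⟨hdih, hsub⟩ := mem_dihedralPairs.1 hp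
  rcases sublist_append_reverse_append_or_exists_consecutive hsub with
    hrev | ⟨A, r, r', C, hseq, hr, hr'⟩
  · exact .inl (mem_dihedralPairs.2 ⟨hdih, h.dihedralSeq_swap ▸ hrev⟩)
  · exact .inr (hdih.dihedralSeq_subset_of_consecutive h hseq hr hr')

theorem mem_maximalDihedralPairs_block (h : IsDihedralPair u v)
    (hnd : (P ++ dihedralSeq u v ++ S).Nodup) :
    (u, v) ∈ maximalDihedralPairs (P ++ dihedralSeq u v ++ S) := by
  refine mem_maximalDihedralPairs.2 ⟨h.mem_dihedralPairs_block P S, fun p hp hsub => ?_⟩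
  obtain ⟨hdih, hpL⟩ := mem_dihedralPairs.1 hp
  have hinf := isInfix_of_sublist_of_subset hnd hpL hsub
  exact Prod.ext_iff.2 (hdih.eq_of_dihedralSeq_isInfix h hinf)

theorem erase_maximalDihedralPairs_subset (h : IsDihedralPair u v) (P S : List W) :
    (maximalDihedralPairs (P ++ dihedralSeq u v ++ S)).erase (u, v) ⊆
      (maximalDihedralPairs (P ++ dihedralSeq v u ++ S)).erase (v, u) := by
  intro p hp
  obtain ⟨hne, hmem⟩ := Finset.mem_erase.1 hp
  obtain ⟨hpL, hmax⟩ := mem_maximalDihedralPairs.1 hmem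
  have hswap : dihedralSeq v u ⊆ dihedralSeq u v := by
    simp [h.dihedralSeq_swap]
  have hnot : ¬ dihedralSeq p.1 p.2 ⊆ dihedralSeq u v := fun hsub =>
    hne (hmax (u, v) (h.mem_dihedralPairs_block P S) hsub).symm
  refine Finset.mem_erase.2 ⟨?_, mem_maximalDihedralPairs.2 ⟨?_, fun p' hp' hsub => ?_⟩⟩
  · rintro rfl
    exact hnot hswap
  · exact (h.mem_dihedralPairs_swap_or_subset hpL).resolve_right hnot
  · refine hmax p' ((h.symm.mem_dihedralPairs_swap_or_subset hp').resolve_right ?_) hsub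
    exact fun hsub' => hnot (List.Subset.trans (List.Subset.trans hsub hsub') hswap)

theorem sum_maximalDihedralPairs_swap {A : Type*} [AddCommGroup A] (h : IsDihedralPair u v)
    (hnd : (P ++ dihedralSeq u v ++ S).Nodup) (φ : W × W → A) :
    ∑ p ∈ maximalDihedralPairs (P ++ dihedralSeq v u ++ S), φ p -
        ∑ p ∈ maximalDihedralPairs (P ++ dihedralSeq u v ++ S), φ p =
      φ (v, u) - φ (u, v) := by
  have hnd' : (P ++ dihedralSeq v u ++ S).Nodup := by
    rw [h.dihedralSeq_swap]
    exact (((List.reverse_perm _).append_left P).append_right S).nodup_iff.2 hnd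
  have herase := (h.erase_maximalDihedralPairs_subset P S).antisymm
    (h.symm.erase_maximalDihedralPairs_subset P S)
  rw [← Finset.add_sum_erase _ φ (h.mem_maximalDihedralPairs_block hnd),
    ← Finset.add_sum_erase _ φ (h.symm.mem_maximalDihedralPairs_block hnd'), herase,
    add_sub_add_right_eq_sub]

end IsDihedralPair

end Dihedral

theorem exists_conj_conj_iff {W : Type*} [Group W] {x y x' y' : W} (q : W) :
    (∃ r, r * MulAut.conj q x * r⁻¹ = x' ∧ r * MulAut.conj q y * r⁻¹ = y') ↔
      ∃ r, r * x * r⁻¹ = x' ∧ r * y * r⁻¹ = y' := by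
  rw [(Group.mulRight_bijective q).surjective.exists (p := fun r => r * x * r⁻¹ = x' ∧ _)]
  simp [mul_assoc]

section Coxeter

variable {B W : Type*} [Group W] {M : CoxeterMatrix B} (cs : CoxeterSystem M W)

theorem altList_succ {α : Type*} (s t : α) (m : ℕ) :
    altList s t (m + 1) = s :: altList t s m := by
  simp only [altList, List.range_succ_eq_map, List.map_cons, List.map_map, Function.comp_def]
  congr 1
  refine List.map_congr_left fun k _ => ?_
  rcases Nat.mod_two_eq_zero_or_one k with hk | hk <;> simp [hk, Nat.succ_mod_two_eq_zero_iff]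

theorem altList_eq_alternatingWord (i j : B) (m : ℕ) :
    altList i j m = if Even m then CoxeterSystem.alternatingWord i j m
      else CoxeterSystem.alternatingWord j i m := by
  induction m generalizing i j with
  | zero => rfl
  | succ m ih =>
    rw [altList_succ, ih]
    by_cases hm : Even m <;> simp [hm, Nat.even_add_one, CoxeterSystem.alternatingWord_succ']

theorem wordProd_altList_swap (i j : B) :
    cs.wordProd (altList i j (M i j)) = cs.wordProd (altList j i (M i j)) := by
  have hbraid := cs.wordProd_braidWord_eq i j
  rw [CoxeterSystem.braidWord, CoxeterSystem.braidWord, M.symmetric j i] at hbraid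
  by_cases hm : Even (M i j) <;> simp [altList_eq_alternatingWord, hm, hbraid]

theorem leftInvSeq_append (a b : List B) :
    cs.leftInvSeq (a ++ b) =
      cs.leftInvSeq a ++ (cs.leftInvSeq b).map (MulAut.conj (cs.wordProd a)) := by
  induction a with
  | nil => simp
  | cons i a ih =>
    simp [CoxeterSystem.leftInvSeq, ih, CoxeterSystem.wordProd_cons, Function.comp_def]

theorem leftInvSeq_altList (i j : B) (m : ℕ) :
    cs.leftInvSeq (altList i j m) =
      (List.range m).map fun k => (cs.simple i * cs.simple j) ^ k * cs.simple i := by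
  induction m generalizing i j with
  | zero => rfl
  | succ m ih =>
    rw [altList_succ, CoxeterSystem.leftInvSeq, ih, List.range_succ_eq_map]
    simp only [List.map_cons, List.map_map, Function.comp_def, pow_zero, one_mul,
      MulAut.conj_apply, CoxeterSystem.inv_simple]
    congr 1
    refine List.map_congr_left fun k _ => ?_
    rw [← mul_assoc, ← mul_pow_mul, pow_succ]
    simp only [mul_assoc]

theorem leftInvSeq_altList_eq_dihedralSeq {i j : B}
    (hord : orderOf (cs.simple i * cs.simple j) = M i j) :
    cs.leftInvSeq (altList i j (M i j)) = dihedralSeq (cs.simple i) (cs.simple j) := by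
  rw [leftInvSeq_altList, dihedralSeq, hord]

theorem isDihedralPair_simple {i j : B} (hij : i ≠ j) (hM : M i j ≠ 0)
    (hord : orderOf (cs.simple i * cs.simple j) = M i j) :
    IsDihedralPair (cs.simple i) (cs.simple j) where
  left_mul_self := cs.simple_mul_simple_self i
  right_mul_self := cs.simple_mul_simple_self j
  one_lt_orderOf := by
    have hone : M i j ≠ 1 := M.off_diagonal i j hij
    omega

variable {cs} {i j : B} {a b : List B}

theorem IsBraidMove.exists_leftInvSeq_eq (h : IsBraidMove cs i j a b) (ha : cs.IsReduced a) :
    ∃ (q : W) (P S : List W),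
      let u := MulAut.conj q (cs.simple i)
      let v := MulAut.conj q (cs.simple j)
      IsDihedralPair u v ∧ cs.leftInvSeq a = P ++ dihedralSeq u v ++ S ∧
        cs.leftInvSeq b = P ++ dihedralSeq v u ++ S := by
  obtain ⟨hij, hM, n, -, hpa, hpb⟩ := h
  generalize a.take n = p at hpa hpb
  generalize a.drop (n + M i j) = s at hpa hpb
  subst hpa hpb
  have hnd := ha.nodup_leftInvSeq
  simp only [leftInvSeq_append] at hnd
  have hblock : (cs.leftInvSeq (altList i j (M i j))).Nodup :=
    hnd.of_append_left.of_append_right.of_map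
  have hord : orderOf (cs.simple i * cs.simple j) = M i j :=
    orderOf_eq_of_nodup (Nat.pos_of_ne_zero hM) (cs.simple_mul_simple_pow i j)
      (leftInvSeq_altList cs i j _ ▸ hblock)
  have hdih := isDihedralPair_simple cs hij hM hord
  have hord' : orderOf (cs.simple j * cs.simple i) = M j i := by
    rw [hdih.mul_swap_eq_inv, orderOf_inv, hord, M.symmetric]
  refine ⟨cs.wordProd p, cs.leftInvSeq p,
    (cs.leftInvSeq s).map (MulAut.conj (cs.wordProd (p ++ altList i j (M i j)))),
    hdih.map _, ?_, ?_⟩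
  · rw [leftInvSeq_append, leftInvSeq_append, leftInvSeq_altList_eq_dihedralSeq cs hord,
      map_dihedralSeq]
  · rw [leftInvSeq_append, leftInvSeq_append, CoxeterSystem.wordProd_append,
      CoxeterSystem.wordProd_append, wordProd_altList_swap, M.symmetric i j,
      leftInvSeq_altList_eq_dihedralSeq cs hord', map_dihedralSeq]

theorem IsBraidMove.sum_maximalDihedralPairs_sub {A : Type*} [AddCommGroup A]
    (h : IsBraidMove cs i j a b) (ha : cs.IsReduced a) (φ : W × W → A)
    (hφ : ∀ q x y, φ (MulAut.conj q x, MulAut.conj q y) = φ (x, y)) :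
    ∑ p ∈ maximalDihedralPairs (cs.leftInvSeq b), φ p -
        ∑ p ∈ maximalDihedralPairs (cs.leftInvSeq a), φ p =
      φ (cs.simple j, cs.simple i) - φ (cs.simple i, cs.simple j) := by
  obtain ⟨q, P, S, hdih, hLa, hLb⟩ := h.exists_leftInvSeq_eq ha
  have hnd := ha.nodup_leftInvSeq
  rw [hLa] at hnd
  rw [hLa, hLb, hdih.sum_maximalDihedralPairs_swap hnd, hφ, hφ]

theorem sum_simple_pairs_eq_sum_swap_of_cycle {A : Type*} [AddCommGroup A] {k : ℕ}
    {c : ℕ → List B} {f g : ℕ → B} (hred : ∀ n < k, cs.IsReduced (c n)) (hcyc : c k = c 0)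
    (hmove : ∀ n < k, IsBraidMove cs (f n) (g n) (c n) (c (n + 1))) (φ : W × W → A)
    (hφ : ∀ q x y, φ (MulAut.conj q x, MulAut.conj q y) = φ (x, y)) :
    ∑ n ∈ Finset.range k, φ (cs.simple (f n), cs.simple (g n)) =
      ∑ n ∈ Finset.range k, φ (cs.simple (g n), cs.simple (f n)) := by
  let potential (n : ℕ) : A := ∑ p ∈ maximalDihedralPairs (cs.leftInvSeq (c n)), φ p
  rw [eq_comm, ← sub_eq_zero, ← Finset.sum_sub_distrib]
  calc ∑ n ∈ Finset.range k,
        (φ (cs.simple (g n), cs.simple (f n)) - φ (cs.simple (f n), cs.simple (g n)))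
      = ∑ n ∈ Finset.range k, (potential (n + 1) - potential n) := by
        refine Finset.sum_congr rfl fun n hn => ?_
        have hnk := Finset.mem_range.1 hn
        exact ((hmove n hnk).sum_maximalDihedralPairs_sub (hred n hnk) φ hφ).symm
    _ = potential k - potential 0 := Finset.sum_range_sub potential k
    _ = 0 := by simp only [potential, hcyc, sub_self]

variable (cs)

theorem simConj_swap_left {i j s t : B} :
    SimConj cs (j, i) (s, t) ↔ SimConj cs (i, j) (t, s) :=
  exists_congr fun _ => and_comm

end Coxeter

/-- Let `C` be a directed cycle `→c_0, →c_1, …, →c_k = →c_0` in the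
graph `R(w)` of reduced expressions of `w`, where `→c_{n+1}` is obtained from `→c_n` by
an `(s_{f n}, s_{g n})`-braid move. Fix a color `c = [(s,t)]` (with `(s,t) ∈ 𝔐`). Then
the number of arcs of `C` colored `c` equals the number of arcs colored `c^op = [(t,s)]`. -/
theorem cycle_color_balance {B W : Type*} [Group W] {M : CoxeterMatrix B}
    (cs : CoxeterSystem M W) (w : W) (k : ℕ) (c : ℕ → List B) (f g : ℕ → B)
    (hred : ∀ n ≤ k, cs.IsReduced (c n) ∧ cs.wordProd (c n) = w)
    (hcyc : c k = c 0)
    (hmove : ∀ n < k, IsBraidMove cs (f n) (g n) (c n) (c (n + 1)))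
    (s t : B) (hst : s ≠ t) (hfin : M.M s t ≠ 0) :
    ((Finset.range k).filter (fun n => SimConj cs (f n, g n) (s, t))).card =
    ((Finset.range k).filter (fun n => SimConj cs (f n, g n) (t, s))).card := by
  let φ (p : W × W) : ℤ :=
    if ∃ q, q * p.1 * q⁻¹ = cs.simple s ∧ q * p.2 * q⁻¹ = cs.simple t then 1 else 0
  have hφ (q x y : W) : φ (MulAut.conj q x, MulAut.conj q y) = φ (x, y) :=
    if_congr (exists_conj_conj_iff q) rfl rfl
  have hswap (n : ℕ) : φ (cs.simple (g n), cs.simple (f n)) =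
      if SimConj cs (f n, g n) (t, s) then 1 else 0 :=
    if_congr (simConj_swap_left cs) rfl rfl
  have hsum := sum_simple_pairs_eq_sum_swap_of_cycle (fun n hn => (hred n hn.le).1) hcyc hmove φ hφ
  simp only [hswap] at hsum
  zify
  rw [Finset.natCast_card_filter, Finset.natCast_card_filter]
  exact hsum
end
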